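/- arXiv:1804.02582 — 3 statements merged into one kernel-verified Lean document; each statement's English description precedes it below -/
import Mathlib

section
/- Let m and p be finite index types, let A be an invertible (m ⊕ p) × (m ⊕ p) complex matrix (the blocks indexed by m corresponding to boundary degrees of freedom and those indexed by p to interior ones), and let M be an m × m complex matrix. Define the (m ⊕ p) × (m ⊕ p) matrix B as the block matrix with upper-left block M and all other blocks zero, and define the m × m matrix T := (A⁻¹)₁₁ · M, where (A⁻¹)₁₁ denotes the upper-left m × m block of A⁻¹. Then for every nonzero λ ∈ ℂ the following are equivalent: (i) there exists a nonzero vector u ∈ ℂ^(m ⊕ p) with A u = −λ · B u; (ii) there exists a nonzero vector g ∈ ℂ^m with T g = (−1/λ) · g. Moreover, in the direction (i) ⟹ (ii) one may take g to be the m-component (boundary restriction) of u. -/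
/-!
Since `B` is supported on the boundary block, `B u` depends only on the boundary part `g` of `u`:
it is `M g` extended by zero. Restricting `u = -λ A⁻¹ B u` to the boundary therefore gives
`g = -λ T g`, and `g = 0` would force `A u = 0`, hence `u = 0`. Conversely, an eigenvector `g`
of `T` is the boundary part of `u = -λ A⁻¹ (M g, 0)`, which solves the full problem.
-/

theorem fromBlocks_mulVec_boundary {m p : Type*} [Fintype m] [Fintype p]
    (M : Matrix m m ℂ) (u : (m ⊕ p) → ℂ) :
    (Matrix.fromBlocks M 0 0 (0 : Matrix p p ℂ)).mulVec u =
      Sum.elim (M.mulVec (u ∘ Sum.inl)) 0 := by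
  simp [Matrix.fromBlocks_mulVec]

theorem mulVec_elim_zero_comp_inl {m p : Type*} [Fintype m] [Fintype p]
    (C : Matrix (m ⊕ p) (m ⊕ p) ℂ) (v : m → ℂ) :
    C.mulVec (Sum.elim v 0) ∘ Sum.inl = C.toBlocks₁₁.mulVec v := by
  ext i
  simp [Matrix.mulVec, dotProduct, Matrix.toBlocks₁₁]

/-- Boundary reduction underlying the S-RIM algorithm: nonzero eigenvalues `λ` of the
generalized problem `A u = -λ B u` (with `B` supported on the boundary block) correspond
exactly to eigenvalues `μ = -1/λ` of the boundary matrix `T = (A⁻¹)₁₁ M`, and one may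
take the eigenvector of `T` to be the boundary restriction of `u`. -/
theorem steklov_boundary_reduction
    {m p : Type*} [Fintype m] [Fintype p] [DecidableEq m] [DecidableEq p]
    (A : Matrix (m ⊕ p) (m ⊕ p) ℂ) (hA : IsUnit A)
    (M : Matrix m m ℂ)
    (B : Matrix (m ⊕ p) (m ⊕ p) ℂ) (hB : B = Matrix.fromBlocks M 0 0 0)
    (T : Matrix m m ℂ) (hT : T = (A⁻¹).toBlocks₁₁ * M)
    (lam : ℂ) (hlam : lam ≠ 0) :
    ((∃ u : (m ⊕ p) → ℂ, u ≠ 0 ∧ A.mulVec u = (-lam) • B.mulVec u) ↔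
      (∃ g : m → ℂ, g ≠ 0 ∧ T.mulVec g = (-1 / lam) • g)) ∧
    (∀ u : (m ⊕ p) → ℂ, u ≠ 0 → A.mulVec u = (-lam) • B.mulVec u →
      u ∘ Sum.inl ≠ 0 ∧ T.mulVec (u ∘ Sum.inl) = (-1 / lam) • (u ∘ Sum.inl)) := by
  subst hB hT
  have hdet : IsUnit A.det := (Matrix.isUnit_iff_isUnit_det A).mp hA
  have fwd : ∀ u : (m ⊕ p) → ℂ, u ≠ 0 →
      A.mulVec u = (-lam) • (Matrix.fromBlocks M 0 0 0).mulVec u →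
      u ∘ Sum.inl ≠ 0 ∧ ((A⁻¹).toBlocks₁₁ * M).mulVec (u ∘ Sum.inl) =
        (-1 / lam) • (u ∘ Sum.inl) := by
    intro u hu h
    rw [fromBlocks_mulVec_boundary] at h
    have hsol : u = (-lam) • (A⁻¹).mulVec (Sum.elim (M.mulVec (u ∘ Sum.inl)) 0) := by
      rw [← Matrix.mulVec_smul, ← h, Matrix.mulVec_mulVec, Matrix.nonsing_inv_mul A hdet,
        Matrix.one_mulVec]
    refine ⟨fun h0 => hu ?_, ?_⟩
    · rw [hsol, h0, Matrix.mulVec_zero, Sum.elim_zero_zero, Matrix.mulVec_zero, smul_zero]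
    · have hres : u ∘ Sum.inl =
          (-lam) • ((A⁻¹).toBlocks₁₁ * M).mulVec (u ∘ Sum.inl) := by
        rw [← Matrix.mulVec_mulVec, ← mulVec_elim_zero_comp_inl]
        exact congrArg (fun w : (m ⊕ p) → ℂ => w ∘ Sum.inl) hsol
      have hc : -1 / lam * -lam = 1 := by field_simp
      conv_rhs => rw [hres, smul_smul, hc, one_smul]
  refine ⟨⟨fun ⟨u, hu, h⟩ => ⟨u ∘ Sum.inl, fwd u hu h⟩, ?_⟩, fwd⟩
  rintro ⟨g, hg, h⟩
  set u : (m ⊕ p) → ℂ := (-lam) • (A⁻¹).mulVec (Sum.elim (M.mulVec g) 0) with hu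
  have hug : u ∘ Sum.inl = g := by
    have hres : u ∘ Sum.inl = (-lam) • ((A⁻¹).toBlocks₁₁ * M).mulVec g := by
      rw [← Matrix.mulVec_mulVec, ← mulVec_elim_zero_comp_inl]
      rfl
    have hc : -lam * (-1 / lam) = 1 := by field_simp
    rw [hres, h, smul_smul, hc, one_smul]
  refine ⟨u, fun h0 => hg ?_, ?_⟩
  · rw [← hug, h0]
    rfl
  · rw [fromBlocks_mulVec_boundary, hug, hu, Matrix.mulVec_smul, Matrix.mulVec_mulVec,
      Matrix.mul_nonsing_inv A hdet, Matrix.one_mulVec]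
end

section
/- Let T be an n × n complex matrix, let c ∈ ℂ and r > 0, and assume that z·I − T is invertible for every z on the circle {z : |z − c| = r}. Let μ ∈ ℂ with |μ − c| < r, and let v ∈ ℂⁿ be a generalized eigenvector of T for μ, i.e. (μ·I − T)^n v = 0. Then (1/(2πi)) ∮_{|z−c|=r} (z·I − T)⁻¹ v dz = v, where the contour integral is taken counterclockwise over the circle. -/
/-!
On a generalized eigenvector `v` for `μ` the resolvent is a finite Laurent polynomial in `z - μ`:
`(zI - T)⁻¹ v = ∑_{k < n} (z - μ)^{-(k+1)} (T - μI)^k v`, since applying `zI - T` to the right-hand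
side telescopes to `v - (z - μ)^{-n} (T - μI)^n v = v` (`mulVec_laurent_sum`). Integrating term by
term over the circle, only `k = 0` contributes, with residue `v`.
-/

open Metric

/-- The telescoping identity behind the Laurent expansion of the resolvent. -/
lemma mulVec_laurent_sum {n : ℕ} (T : Matrix (Fin n) (Fin n) ℂ) (μ z : ℂ) (hz : z - μ ≠ 0)
    (v : Fin n → ℂ) (m : ℕ) :
    (z • (1 : Matrix (Fin n) (Fin n) ℂ) - T).mulVec
      (∑ k ∈ Finset.range m, (z - μ) ^ (-((k : ℤ) + 1)) •
        ((T - μ • (1 : Matrix (Fin n) (Fin n) ℂ)) ^ k).mulVec v) =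
      v - (z - μ) ^ (-(m : ℤ)) • ((T - μ • (1 : Matrix (Fin n) (Fin n) ℂ)) ^ m).mulVec v := by
  induction m with
  | zero => simp
  | succ m ih =>
    have hsplit : z • (1 : Matrix (Fin n) (Fin n) ℂ) - T =
        (z - μ) • (1 : Matrix (Fin n) (Fin n) ℂ) - (T - μ • (1 : Matrix (Fin n) (Fin n) ℂ)) := by
      rw [sub_smul]; abel
    have hpow : (z - μ) ^ (-((m : ℤ) + 1)) * (z - μ) = (z - μ) ^ (-(m : ℤ)) := by
      rw [← zpow_add_one₀ hz]; congr 1; ring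
    rw [Finset.sum_range_succ, Matrix.mulVec_add, ih, Matrix.mulVec_smul, hsplit,
      Matrix.sub_mulVec, Matrix.smul_mulVec, Matrix.one_mulVec, Matrix.mulVec_mulVec,
      ← pow_succ', smul_sub, smul_smul, hpow]
    push_cast
    abel

/-- The Riesz spectral projection `E = (1/2πi) ∮_Γ (zI - T)⁻¹ dz` acts as the identity on
generalized eigenvectors of eigenvalues `μ` lying inside the contour `Γ`. -/
theorem riesz_projection_eq_id_on_generalized_eigenspace
    (n : ℕ) (T : Matrix (Fin n) (Fin n) ℂ) (c : ℂ) (r : ℝ) (hr : 0 < r)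
    (hres : ∀ z ∈ sphere c r, IsUnit (z • (1 : Matrix (Fin n) (Fin n) ℂ) - T))
    (μ : ℂ) (hμ : μ ∈ ball c r)
    (v : Fin n → ℂ)
    (hv : ((μ • (1 : Matrix (Fin n) (Fin n) ℂ) - T) ^ n).mulVec v = 0) :
    (2 * Real.pi * Complex.I : ℂ)⁻¹ •
      (∮ z in C(c, r), ((z • (1 : Matrix (Fin n) (Fin n) ℂ) - T)⁻¹).mulVec v) = v := by
  have hne : ∀ z ∈ sphere c r, z - μ ≠ 0 := by
    intro z hz h
    rw [sub_eq_zero] at h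
    subst h
    exact (mem_ball.1 hμ).ne (mem_sphere.1 hz)
  have hw : ((T - μ • (1 : Matrix (Fin n) (Fin n) ℂ)) ^ n).mulVec v = 0 := by
    rw [← neg_sub, neg_pow, ← Matrix.mulVec_mulVec, hv, Matrix.mulVec_zero]
  have hexp : Set.EqOn
      (fun z : ℂ => ((z • (1 : Matrix (Fin n) (Fin n) ℂ) - T)⁻¹).mulVec v)
      (fun z => ∑ k ∈ Finset.range n, (z - μ) ^ (-((k : ℤ) + 1)) •
        ((T - μ • (1 : Matrix (Fin n) (Fin n) ℂ)) ^ k).mulVec v) (sphere c r) := by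
    intro z hz
    have h := mulVec_laurent_sum T μ z (hne z hz) v n
    rw [hw, smul_zero, sub_zero] at h
    have hdet := (Matrix.isUnit_iff_isUnit_det _).1 (hres z hz)
    dsimp only
    nth_rewrite 1 [← h]
    rw [Matrix.mulVec_mulVec, Matrix.nonsing_inv_mul _ hdet, Matrix.one_mulVec]
  rw [circleIntegral.integral_congr hr.le hexp, circleIntegral.integral_fun_sum]
  · simp_rw [circleIntegral.integral_smul_const]
    have hn : n = 0 ∨ 0 < n := Nat.eq_zero_or_pos n
    rcases hn with rfl | hn
    · exact Subsingleton.elim _ _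
    rw [Finset.sum_eq_single_of_mem 0 (Finset.mem_range.2 hn)]
    · have h0 : (∮ z in C(c, r), (z - μ) ^ (-(((0 : ℕ) : ℤ) + 1))) = 2 * Real.pi * Complex.I := by
        simpa using circleIntegral.integral_sub_inv_of_mem_ball hμ
      rw [h0, pow_zero, Matrix.one_mulVec, smul_smul, inv_mul_cancel₀ Complex.two_pi_I_ne_zero,
        one_smul]
    · intro k _ hk
      rw [circleIntegral.integral_sub_zpow_of_ne (by omega), zero_smul]
  · intro k _
    refine ContinuousOn.circleIntegrable hr.le ?_
    refine ContinuousOn.smul (ContinuousOn.zpow₀ (continuousOn_id.sub continuousOn_const) _ ?_) continuousOn_const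
    exact fun z hz => Or.inl (hne z hz)
end

section
/- Let T be an n × n complex matrix, let c ∈ ℂ and r > 0, and assume that z·I − T is invertible for every z on the circle {z : |z − c| = r}. Let μ ∈ ℂ with |μ − c| > r, and let v ∈ ℂⁿ be a generalized eigenvector of T for μ, i.e. (μ·I − T)^n v = 0. Then (1/(2πi)) ∮_{|z−c|=r} (z·I − T)⁻¹ v dz = 0, where the contour integral is taken counterclockwise over the circle. -/
/-!
Write `N = μ - T`, so that `N ^ n v = 0` and `z - T = (z - μ) + N`. For `z ≠ μ` the Neumann series
of the resolvent terminates on `v`: the vector `∑ k < n, (z - μ)⁻¹ ^ (k + 1) • (-N) ^ k v` is sent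
to `v` by `z - T` (`mulVec_neumann_sum`). On the circle it is therefore `(z - T)⁻¹ v`; since it is
holomorphic in `z` away from `μ`, which lies outside the closed disc, Cauchy's theorem makes the
integral vanish, whatever eigenvalues `T` has inside the disc.
-/

open Metric

/-- The terminating Neumann series solves `(z - T) x = v` for a generalized eigenvector `v`;
invertibility of `z - T` is not needed. -/
lemma mulVec_neumann_sum {n : ℕ} (T : Matrix (Fin n) (Fin n) ℂ) {μ z : ℂ} (hz : z ≠ μ)
    (v : Fin n → ℂ)
    (hv : ((μ • (1 : Matrix (Fin n) (Fin n) ℂ) - T) ^ n).mulVec v = 0) :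
    (z • (1 : Matrix (Fin n) (Fin n) ℂ) - T).mulVec
      (∑ k ∈ Finset.range n, ((z - μ)⁻¹ ^ (k + 1)) •
        ((-(μ • (1 : Matrix (Fin n) (Fin n) ℂ) - T)) ^ k).mulVec v) = v := by
  set N := μ • (1 : Matrix (Fin n) (Fin n) ℂ) - T with hN
  have ha : z - μ ≠ 0 := sub_ne_zero.mpr hz
  set a := (z - μ)⁻¹ with ha'
  have hsum : (∑ k ∈ Finset.range n, (a ^ (k + 1)) • ((-N) ^ k).mulVec v) =
      (a • ∑ k ∈ Finset.range n, (a • (-N)) ^ k).mulVec v := by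
    rw [Finset.smul_sum, Matrix.sum_mulVec]
    refine Finset.sum_congr rfl fun k _ => ?_
    rw [smul_pow, smul_smul, Matrix.smul_mulVec, pow_succ']
  have hfac : z • (1 : Matrix (Fin n) (Fin n) ℂ) - T = (z - μ) • (1 - a • (-N)) := by
    rw [smul_sub, smul_smul, ha', mul_inv_cancel₀ ha, one_smul, hN, sub_smul]
    abel
  have hpow : ((a • (-N)) ^ n).mulVec v = 0 := by
    rw [smul_pow, neg_pow, Matrix.smul_mulVec, ← Matrix.mulVec_mulVec, hv, Matrix.mulVec_zero,
      smul_zero]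
  rw [hsum, hfac, Matrix.mulVec_mulVec, smul_mul_smul_comm, mul_neg_geom_sum, ha',
    mul_inv_cancel₀ ha, one_smul, ← ha', Matrix.sub_mulVec, hpow, Matrix.one_mulVec, sub_zero]

/-- The Riesz spectral projection `E = (1/2πi) ∮_Γ (zI - T)⁻¹ dz` annihilates
generalized eigenvectors of eigenvalues `μ` lying outside the contour `Γ`. -/
theorem riesz_projection_eq_zero_on_generalized_eigenspace
    (n : ℕ) (T : Matrix (Fin n) (Fin n) ℂ) (c : ℂ) (r : ℝ) (hr : 0 < r)
    (hres : ∀ z ∈ sphere c r, IsUnit (z • (1 : Matrix (Fin n) (Fin n) ℂ) - T))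
    (μ : ℂ) (hμ : r < dist μ c)
    (v : Fin n → ℂ)
    (hv : ((μ • (1 : Matrix (Fin n) (Fin n) ℂ) - T) ^ n).mulVec v = 0) :
    (2 * Real.pi * Complex.I : ℂ)⁻¹ •
      (∮ z in C(c, r), ((z • (1 : Matrix (Fin n) (Fin n) ℂ) - T)⁻¹).mulVec v) = 0 := by
  have hne : ∀ z ∈ closedBall c r, z ≠ μ := by
    rintro z hz rfl
    exact absurd (mem_closedBall.mp hz) (not_le.mpr hμ)
  have hcongr : (∮ z in C(c, r), ((z • (1 : Matrix (Fin n) (Fin n) ℂ) - T)⁻¹).mulVec v) =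
      ∮ z in C(c, r), ∑ k ∈ Finset.range n, ((z - μ)⁻¹ ^ (k + 1)) •
        ((-(μ • (1 : Matrix (Fin n) (Fin n) ℂ) - T)) ^ k).mulVec v := by
    refine circleIntegral.integral_congr hr.le fun z hz => ?_
    have hdet := (Matrix.isUnit_iff_isUnit_det _).mp (hres z hz)
    have h := mulVec_neumann_sum T (hne z (sphere_subset_closedBall hz)) v hv
    have h' := congrArg ((z • (1 : Matrix (Fin n) (Fin n) ℂ) - T)⁻¹).mulVec h
    rw [Matrix.mulVec_mulVec, Matrix.nonsing_inv_mul _ hdet, Matrix.one_mulVec] at h'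
    exact h'.symm
  have hdiff : ∀ z ∈ closedBall c r, DifferentiableAt ℂ (fun z : ℂ =>
      ∑ k ∈ Finset.range n, ((z - μ)⁻¹ ^ (k + 1)) •
        ((-(μ • (1 : Matrix (Fin n) (Fin n) ℂ) - T)) ^ k).mulVec v) z := by
    intro z hz
    have hz' : z - μ ≠ 0 := sub_ne_zero.mpr (hne z hz)
    refine DifferentiableAt.fun_sum fun k _ => DifferentiableAt.smul_const ?_ _
    exact ((differentiableAt_id.sub_const μ).inv hz').pow (k + 1)
  rw [hcongr, Complex.circleIntegral_eq_zero_of_differentiable_on_off_countable hr.le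
    Set.countable_empty (fun z hz => (hdiff z hz).continuousAt.continuousWithinAt)
    (fun z hz => hdiff z (ball_subset_closedBall hz.1)), smul_zero]
end
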